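/- If F₁ and F₂ are two maximal hke collections with α(F₁) = α(F₂), then F₁ and F₂ are isomorphic: there is a bijection g : ⋃F₁ → ⋃F₂ such that g[S] ∈ F₂ for every S ∈ F₁ and g⁻¹[S] ∈ F₁ for every S ∈ F₂. -/

import Mathlib

open Finset

/-- The union of a finite collection of finite sets. -/
def famUnion (Γ : Finset (Finset ℕ)) : Finset ℕ := Γ.sup id

/-- The intersection of a finite collection of finite sets
(equal to the usual intersection when the collection is nonempty). -/
def famInter (Γ : Finset (Finset ℕ)) : Finset ℕ :=
  (Γ.sup id).filter (fun x => ∀ A ∈ Γ, x ∈ A)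

/-- `F` is a hereditary König–Egerváry (hke) collection with `α(F) = α`:
`α` is a positive integer and `|⋃Γ| + |⋂Γ| = 2α` for every nonempty subcollection `Γ` of `F`. -/
def IsHKE (F : Finset (Finset ℕ)) (α : ℕ) : Prop :=
  0 < α ∧ ∀ Γ ⊆ F, Γ.Nonempty → (famUnion Γ).card + (famInter Γ).card = 2 * α

/-- `F` is a maximal hke collection: it is an hke collection and no collection
properly containing it is an hke collection. -/
def IsMaxHKE (F : Finset (Finset ℕ)) : Prop :=
  (∃ α, IsHKE F α) ∧ ∀ F' : Finset (Finset ℕ), F ⊂ F' → ¬ ∃ β, IsHKE F' β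

/-- Two collections are isomorphic: there is a bijection `g : ⋃F₁ → ⋃F₂` such that
`g[S] ∈ F₂` for every `S ∈ F₁` and `g⁻¹[S] ∈ F₁` for every `S ∈ F₂`. -/
def CollIso (F₁ F₂ : Finset (Finset ℕ)) : Prop :=
  ∃ g : ℕ → ℕ, Set.BijOn g ↑(famUnion F₁) ↑(famUnion F₂) ∧
    (∀ S ∈ F₁, S.image g ∈ F₂) ∧
    (∀ S ∈ F₂, (famUnion F₁).filter (fun x => g x ∈ S) ∈ F₁)

/-!
Enlarge `⋃F` to a set `U` with `2α` elements. The hke condition then says that, for every `P ⊆ F`,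
as many points of `U` lie in all members of `P` as lie in none. By induction this symmetry passes
to every cell of the Venn diagram of `F`, so there is a permutation of `U` that complements all
memberships at once. Pairing each point of one fixed `A ∈ F` with its image splits `U` into `α`
pairs, and every member of `F` contains exactly one point of each pair. Since the collection of
all such transversals is itself hke, a maximal `F` is that collection, which depends only on `α`
up to relabelling the points.
-/

lemma exists_equiv_comp_eq_of_card_filter_eq {β γ δ : Type*} [DecidableEq δ] {s : Finset β}
    {t : Finset γ} {f : β → δ} {g : γ → δ} (h : ∀ z, #{x ∈ s | f x = z} = #{y ∈ t | g y = z}) :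
    ∃ e : s ≃ t, ∀ x, g (e x) = f x := by
  have fiberEquiv (z : δ) : Nonempty ({x : s // f x = z} ≃ {y : t // g y = z}) := by
    rw [← Fintype.card_eq]
    simpa [Fintype.card_subtype, filter_attach (f · = z), filter_attach (g · = z)] using h z
  let e : s ≃ t := Equiv.ofFiberEquiv (f := fun x : s ↦ f x) (g := fun y : t ↦ g y)
    fun z ↦ (fiberEquiv z).some
  exact ⟨e, Equiv.ofFiberEquiv_map (g := fun y : t ↦ g y) _⟩

lemma exists_equiv_prod_bool_of_perm {β ι : Type*} {U A : Finset β} {σ : Equiv.Perm U}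
    (hAU : A ⊆ U) (hσ : ∀ x, (σ x : β) ∈ A ↔ (x : β) ∉ A) (e : ι ≃ A) :
    ∃ φ : ι × Bool ≃ U, ∀ i, φ (i, false) = σ (φ (i, true)) := by
  let u (i : ι) : U := ⟨e i, hAU (e i).2⟩
  have u_injective : u.Injective := fun i j h ↦ e.injective (Subtype.ext (congrArg (·.1) h))
  have u_symm (x : U) (hx : (x : β) ∈ A) : u (e.symm ⟨x, hx⟩) = x := by simp [u]
  let f (p : ι × Bool) : U := if p.2 then u p.1 else σ (u p.1)
  have f_mem_A (p : ι × Bool) : (f p : β) ∈ A ↔ p.2 = true := by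
    have hu : (u p.1 : β) ∈ A := (e p.1).2
    cases hp : p.2 <;> simp [f, hp, hu, hσ]
  have f_injective : f.Injective := by
    rintro ⟨i, b⟩ ⟨j, c⟩ h
    obtain rfl : b = c := Bool.eq_iff_iff.2 (by rw [← f_mem_A (i, b), h, f_mem_A])
    cases b <;> simpa [f, u_injective.eq_iff] using h
  have f_surjective : f.Surjective := fun x ↦ by
    by_cases hx : (x : β) ∈ A
    · exact ⟨(_, true), u_symm x hx⟩
    · have hσx : (σ.symm x : β) ∈ A := by simpa [hx] using hσ (σ.symm x)
      exact ⟨(e.symm ⟨_, hσx⟩, false), by simp [f, u_symm]⟩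
  exact ⟨Equiv.ofBijective f ⟨f_injective, f_surjective⟩, fun _ ↦ rfl⟩

section Balanced

variable {β : Type*} [DecidableEq β] {U A : Finset β} {F P Q : Finset (Finset β)}

/-- The cell of a Venn diagram: the points of `U` that lie in every member of `P` and in no member
of `Q`. -/
def vennCell (U : Finset β) (P Q : Finset (Finset β)) : Finset β :=
  {x ∈ U | (∀ A ∈ P, x ∈ A) ∧ ∀ A ∈ Q, x ∉ A}

/-- The hke condition relative to a ground set `U`: for each subcollection `P` of `F`, as many
points of `U` lie in all members of `P` as in none. Here `α` is implicit, being half the size of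
`U`; see `isHKE_iff_isBalanced`. -/
def IsBalanced (U : Finset β) (F : Finset (Finset β)) : Prop :=
  ∀ P ⊆ F, #(vennCell U P ∅) = #(vennCell U ∅ P)

lemma mem_vennCell {x : β} :
    x ∈ vennCell U P Q ↔ x ∈ U ∧ (∀ A ∈ P, x ∈ A) ∧ ∀ A ∈ Q, x ∉ A :=
  mem_filter

lemma card_vennCell_insert_add_card_vennCell_insert (U B : Finset β) (P Q : Finset (Finset β)) :
    #(vennCell U (insert B P) Q) + #(vennCell U P (insert B Q)) = #(vennCell U P Q) := by
  rw [← card_filter_add_card_filter_not (s := vennCell U P Q) (· ∈ B)]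
  congr 2 <;>
  · ext x
    simp only [mem_vennCell, mem_filter, forall_mem_insert]
    tauto

theorem IsBalanced.card_vennCell_comm (hF : IsBalanced U F) (hP : P ⊆ F) (hQ : Q ⊆ F) :
    #(vennCell U P Q) = #(vennCell U Q P) := by
  induction Q using Finset.induction_on generalizing P with
  | empty => exact hF P hP
  | insert B Q _ ih =>
    obtain ⟨hB, hQ⟩ := insert_subset_iff.1 hQ
    have split_PQ := card_vennCell_insert_add_card_vennCell_insert U B P Q
    have split_QP := card_vennCell_insert_add_card_vennCell_insert U B Q P
    have comm_PQ := ih hP hQ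
    have comm_insert := ih (insert_subset hB hP) hQ
    omega

lemma filter_filter_mem_eq_vennCell (U : Finset β) (hP : P ⊆ F) :
    {x ∈ U | {A ∈ F | x ∈ A} = P} = vennCell U P (F \ P) := by
  ext x
  simp only [mem_filter, mem_vennCell, mem_sdiff, Finset.ext_iff]
  grind

lemma filter_filter_notMem_eq_vennCell (U : Finset β) (hP : P ⊆ F) :
    {x ∈ U | {A ∈ F | x ∉ A} = P} = vennCell U (F \ P) P := by
  ext x
  simp only [mem_filter, mem_vennCell, mem_sdiff, Finset.ext_iff]
  grind

theorem IsBalanced.exists_perm_mem_iff_notMem (hF : IsBalanced U F) :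
    ∃ σ : Equiv.Perm U, ∀ A ∈ F, ∀ x, (σ x : β) ∈ A ↔ (x : β) ∉ A := by
  obtain ⟨σ, hσ⟩ := exists_equiv_comp_eq_of_card_filter_eq (s := U) (t := U)
    (f := fun x ↦ {A ∈ F | x ∈ A}) (g := fun x ↦ {A ∈ F | x ∉ A}) fun P ↦ by
      by_cases hP : P ⊆ F
      · rw [filter_filter_mem_eq_vennCell U hP, filter_filter_notMem_eq_vennCell U hP,
          hF.card_vennCell_comm hP sdiff_subset]
      · rw [filter_false_of_mem, filter_false_of_mem] <;>
        · rintro x - rfl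
          exact hP (filter_subset _ _)
  refine ⟨σ, fun A hA x ↦ ?_⟩
  have mem_iff := Finset.ext_iff.1 (hσ x) A
  simp only [mem_filter, hA, true_and] at mem_iff
  rw [← mem_iff, not_not]

lemma IsBalanced.two_mul_card (hF : IsBalanced U F) (hA : A ∈ F) (hAU : A ⊆ U) :
    2 * #A = #U := by
  have inside_eq : vennCell U {A} ∅ = A := by
    ext x
    simpa [mem_vennCell] using @hAU x
  have outside_eq : vennCell U ∅ {A} = U \ A := by
    ext x
    simp [mem_vennCell]
  have card_eq := hF {A} (singleton_subset_iff.2 hA)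
  rw [inside_eq, outside_eq] at card_eq
  rw [two_mul, ← card_sdiff_add_card_eq_card hAU, ← card_eq]

end Balanced

section Transversals

variable {β γ ι : Type*} [DecidableEq β] [DecidableEq γ] [Fintype ι]
  {φ : ι × Bool ↪ β} {ψ : ι × Bool ↪ γ} {S : Finset β} {T : Finset γ}

/-- The sets containing exactly one point of each pair `{φ (i, true), φ (i, false)}` and no other
points. The embedding `φ` encodes a family of disjoint labelled pairs. -/
def transversals (φ : ι × Bool ↪ β) : Finset (Finset β) :=
  {S ∈ (univ.map φ).powerset | ∀ i b, φ (i, !b) ∈ S ↔ φ (i, b) ∉ S}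

lemma mem_transversals :
    S ∈ transversals φ ↔ S ⊆ univ.map φ ∧ ∀ i b, φ (i, !b) ∈ S ↔ φ (i, b) ∉ S := by
  rw [transversals, mem_filter, mem_powerset]

lemma mem_transversals_of_mem_iff (hS : S ∈ transversals φ) (hT : T ⊆ univ.map ψ)
    (h : ∀ p, ψ p ∈ T ↔ φ p ∈ S) : T ∈ transversals ψ := by
  simpa only [mem_transversals, hT, true_and, h] using (mem_transversals.1 hS).2

lemma image_mk_mem_transversals (φ : ι × Bool ↪ β) (b : Bool) :
    univ.image (fun i ↦ φ (i, b)) ∈ transversals φ := by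
  refine mem_transversals.2 ⟨fun x hx ↦ ?_, fun i c ↦ ?_⟩
  · obtain ⟨i, -, rfl⟩ := mem_image.1 hx
    exact mem_map_of_mem φ (mem_univ _)
  · cases b <;> cases c <;> simp

theorem isBalanced_transversals (φ : ι × Bool ↪ β) :
    IsBalanced (univ.map φ) (transversals φ) := by
  intro P hP
  rw [vennCell, vennCell, filter_map, filter_map, card_map, card_map]
  refine card_equiv ((Equiv.refl ι).prodCongr Equiv.boolNot) fun ⟨i, b⟩ ↦ ?_
  have flip_notMem : ∀ A ∈ P, φ (i, !b) ∉ A ↔ φ (i, b) ∈ A := fun A hA ↦ by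
    rw [(mem_transversals.1 (hP hA)).2 i b, not_not]
  simpa using (forall₂_congr flip_notMem).symm

theorem IsBalanced.exists_subset_transversals {U : Finset β} {F : Finset (Finset β)}
    (hF : IsBalanced U F) (hFU : ∀ A ∈ F, A ⊆ U) (hne : F.Nonempty)
    (hU : #U = 2 * Fintype.card ι) : ∃ φ : ι × Bool ↪ β, F ⊆ transversals φ := by
  obtain ⟨A, hA⟩ := hne
  obtain ⟨σ, hσ⟩ := hF.exists_perm_mem_iff_notMem
  have card_A : Fintype.card ι = #A := by
    have := hF.two_mul_card hA (hFU A hA)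
    omega
  let e : ι ≃ A := Fintype.equivOfCardEq (by rw [card_A, Fintype.card_coe])
  obtain ⟨ε, hε⟩ := exists_equiv_prod_bool_of_perm (hFU A hA) (hσ A hA) e
  let φ : ι × Bool ↪ β := ε.toEmbedding.trans (.subtype _)
  have U_subset : U ⊆ univ.map φ := fun x hx ↦
    mem_map.2 ⟨ε.symm ⟨x, hx⟩, mem_univ _, by simp [φ]⟩
  refine ⟨φ, fun S hS ↦ mem_transversals.2 ⟨(hFU S hS).trans U_subset, fun i b ↦ ?_⟩⟩
  cases b <;> simp [φ, hε, hσ S hS]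

end Transversals

section HKE

variable {F Γ : Finset (Finset ℕ)} {U : Finset ℕ} {α : ℕ}

lemma mem_famUnion {x : ℕ} : x ∈ famUnion Γ ↔ ∃ A ∈ Γ, x ∈ A := by
  simp [famUnion, mem_sup]

lemma famUnion_mono (h : Γ ⊆ F) : famUnion Γ ⊆ famUnion F :=
  sup_mono h

lemma subset_famUnion {A : Finset ℕ} (hA : A ∈ F) : A ⊆ famUnion F :=
  le_sup (f := id) hA

lemma vennCell_empty_right_eq_famInter (hΓ : Γ.Nonempty) (hU : famUnion Γ ⊆ U) :
    vennCell U Γ ∅ = famInter Γ := by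
  obtain ⟨A, hA⟩ := hΓ
  ext x
  have mem_union (h : ∀ B ∈ Γ, x ∈ B) : x ∈ famUnion Γ := mem_famUnion.2 ⟨A, hA, h A hA⟩
  simp only [mem_vennCell, famInter, mem_filter, notMem_empty, IsEmpty.forall_iff, implies_true,
    and_true]
  exact ⟨fun h ↦ ⟨mem_union h.2, h.2⟩, fun h ↦ ⟨hU (mem_union h.2), h.2⟩⟩

lemma vennCell_empty_left_eq_sdiff_famUnion (U : Finset ℕ) (Γ : Finset (Finset ℕ)) :
    vennCell U ∅ Γ = U \ famUnion Γ := by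
  ext x
  simp [mem_vennCell, mem_famUnion]

theorem isHKE_iff_isBalanced (hFU : famUnion F ⊆ U) (hU : #U = 2 * α) :
    IsHKE F α ↔ 0 < α ∧ IsBalanced U F := by
  refine and_congr_right fun _ ↦ forall₂_congr fun Γ hΓ ↦ ?_
  obtain rfl | hne := Γ.eq_empty_or_nonempty
  · simp
  have hΓU : famUnion Γ ⊆ U := (famUnion_mono hΓ).trans hFU
  have card_outside := card_sdiff_add_card_eq_card hΓU
  rw [vennCell_empty_right_eq_famInter hne hΓU, vennCell_empty_left_eq_sdiff_famUnion]
  simp only [hne, forall_const]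
  omega

lemma famUnion_transversals {ι : Type*} [Fintype ι] (φ : ι × Bool ↪ ℕ) :
    famUnion (transversals φ) = univ.map φ := by
  ext x
  rw [mem_famUnion]
  constructor
  · rintro ⟨S, hS, hx⟩
    exact (mem_transversals.1 hS).1 hx
  · intro hx
    obtain ⟨⟨i, b⟩, -, rfl⟩ := mem_map.1 hx
    exact ⟨_, image_mk_mem_transversals φ b, mem_image_of_mem _ (mem_univ i)⟩

theorem isHKE_transversals (hα : 0 < α) (φ : Fin α × Bool ↪ ℕ) : IsHKE (transversals φ) α :=
  (isHKE_iff_isBalanced (famUnion_transversals φ).subset (by simp [mul_comm])).2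
    ⟨hα, isBalanced_transversals φ⟩

theorem IsHKE.exists_subset_transversals (hF : IsHKE F α) :
    ∃ φ : Fin α × Bool ↪ ℕ, F ⊆ transversals φ := by
  obtain rfl | hne := F.eq_empty_or_nonempty
  · exact ⟨⟨Encodable.encode, Encodable.encode_injective⟩, empty_subset _⟩
  have card_union : #(famUnion F) ≤ 2 * α := (Nat.le_add_right _ _).trans_eq (hF.2 F subset_rfl hne)
  obtain ⟨U, hFU, hU⟩ := Infinite.exists_superset_card_eq (famUnion F) (2 * α) card_union
  exact ((isHKE_iff_isBalanced hFU hU).1 hF).2.exists_subset_transversals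
    (fun A hA ↦ (subset_famUnion hA).trans hFU) hne (by rw [hU, Fintype.card_fin])

theorem IsMaxHKE.exists_eq_transversals (hmax : IsMaxHKE F) (hF : IsHKE F α) :
    ∃ φ : Fin α × Bool ↪ ℕ, F = transversals φ := by
  obtain ⟨φ, hφ⟩ := hF.exists_subset_transversals
  refine ⟨φ, by_contra fun hne ↦ ?_⟩
  exact hmax.2 _ (hφ.ssubset_of_ne hne) ⟨α, isHKE_transversals hF.1 φ⟩

theorem collIso_transversals {ι : Type*} [Fintype ι] (φ ψ : ι × Bool ↪ ℕ) :
    CollIso (transversals φ) (transversals ψ) := by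
  let g : ℕ → ℕ := Function.extend φ ψ id
  have g_φ (p : ι × Bool) : g (φ p) = ψ p := φ.injective.extend_apply ψ id p
  have g_comp : g ∘ φ = ψ := funext g_φ
  have bijOn : Set.BijOn g (Set.range φ) (Set.range ψ) := by
    have injOn : Set.InjOn g (Set.range φ) :=
      Function.Injective.injOn_range (g_comp ▸ ψ.injective)
    simpa only [← Set.range_comp, g_comp] using injOn.bijOn_image
  refine ⟨g, ?_, fun S hS ↦ ?_, fun T hT ↦ ?_⟩
  · simpa [famUnion_transversals] using bijOn
  · have hSφ : (S : Set ℕ) ⊆ Set.range φ := by simpa using coe_subset.2 (mem_transversals.1 hS).1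
    refine mem_transversals_of_mem_iff hS ?_ fun p ↦ ?_
    · rw [← coe_subset]
      simpa using (bijOn.mapsTo.mono_left hSφ).image_subset
    · rw [← g_φ, ← mem_coe, coe_image, bijOn.injOn.mem_image_iff hSφ (Set.mem_range_self p),
        mem_coe]
  · rw [famUnion_transversals]
    refine mem_transversals_of_mem_iff hT (filter_subset _ _) fun p ↦ ?_
    simp [g_φ]

end HKE

/-- two maximal hke collections with the same `α` are isomorphic. -/
theorem isMaxHKE_unique (F₁ F₂ : Finset (Finset ℕ)) (α : ℕ)
    (h₁ : IsMaxHKE F₁) (h₂ : IsMaxHKE F₂)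
    (hα₁ : IsHKE F₁ α) (hα₂ : IsHKE F₂ α) :
    CollIso F₁ F₂ := by
  obtain ⟨φ, rfl⟩ := h₁.exists_eq_transversals hα₁
  obtain ⟨ψ, rfl⟩ := h₂.exists_eq_transversals hα₂
  exact collIso_transversals φ ψ
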